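/- Let y* be the maximum of q*_ξ over all measures ξ. A pseudo symmetric measure ξ is universally optimal if and only if q*_ξ = y*. -/

import Mathlib

open Matrix

namespace TwoDim

/-- The set of plots of an `a × b` block. -/
abbrev Plot (a b : ℕ) := Fin a × Fin b

/-- A block array: an assignment of one of `t` treatments to each plot. -/
abbrev BlockArray (a b t : ℕ) := Plot a b → Fin t

/-- The all-ones matrix. -/
def Jmat (n : Type*) : Matrix n n ℝ := Matrix.of fun _ _ => 1

/-- `B_m = I - J/m`. -/
noncomputable def Bmat (n : Type*) [Fintype n] [DecidableEq n] : Matrix n n ℝ :=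
  1 - ((Fintype.card n : ℝ))⁻¹ • Jmat n

variable {a b t : ℕ}

/-- The treatment incidence matrix `T_s`. -/
def Tmat (s : BlockArray a b t) : Matrix (Plot a b) (Fin t) ℝ :=
  Matrix.of fun q k => if s q = k then 1 else 0

/-- Two plots are neighbors if they agree in one coordinate and differ by 1 in the other. -/
def Neighbor (q r : Plot a b) : Prop :=
  (q.1 = r.1 ∧ (q.2.val + 1 = r.2.val ∨ r.2.val + 1 = q.2.val)) ∨
  (q.2 = r.2 ∧ (q.1.val + 1 = r.1.val ∨ r.1.val + 1 = q.1.val))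

instance (q r : Plot a b) : Decidable (Neighbor q r) := by
  unfold Neighbor; infer_instance

/-- The adjacency matrix of the neighbor relation. -/
def Mmat (a b : ℕ) : Matrix (Plot a b) (Plot a b) ℝ :=
  Matrix.of fun q r => if Neighbor q r then 1 else 0

/-- `F_s = M T_s`. -/
def Fmat (s : BlockArray a b t) : Matrix (Plot a b) (Fin t) ℝ :=
  Mmat a b * Tmat s

/-- `B̃ = Σ⁻¹ − Σ⁻¹ J Σ⁻¹ / (1'Σ⁻¹1)`. -/
noncomputable def Btilde (Sig : Matrix (Plot a b) (Plot a b) ℝ) :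
    Matrix (Plot a b) (Plot a b) ℝ :=
  Sig⁻¹ - (∑ i, ∑ j, Sig⁻¹ i j)⁻¹ • (Sig⁻¹ * Jmat (Plot a b) * Sig⁻¹)

/-- `C_{s00} = T_s' W T_s` (with `W` playing the role of `B̃`). -/
def Cs00 (W : Matrix (Plot a b) (Plot a b) ℝ) (s : BlockArray a b t) :
    Matrix (Fin t) (Fin t) ℝ := (Tmat s)ᵀ * W * Tmat s

/-- `C_{s01} = T_s' W F_s`. -/
def Cs01 (W : Matrix (Plot a b) (Plot a b) ℝ) (s : BlockArray a b t) :
    Matrix (Fin t) (Fin t) ℝ := (Tmat s)ᵀ * W * Fmat s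

/-- `C_{s11} = F_s' W F_s`. -/
def Cs11 (W : Matrix (Plot a b) (Plot a b) ℝ) (s : BlockArray a b t) :
    Matrix (Fin t) (Fin t) ℝ := (Fmat s)ᵀ * W * Fmat s

/-- `c_{s00} = tr(B_t C_{s00})`. -/
noncomputable def cs00 (W : Matrix (Plot a b) (Plot a b) ℝ) (s : BlockArray a b t) : ℝ :=
  Matrix.trace (Bmat (Fin t) * Cs00 W s)

noncomputable def cs01 (W : Matrix (Plot a b) (Plot a b) ℝ) (s : BlockArray a b t) : ℝ :=
  Matrix.trace (Bmat (Fin t) * Cs01 W s)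

noncomputable def cs11 (W : Matrix (Plot a b) (Plot a b) ℝ) (s : BlockArray a b t) : ℝ :=
  Matrix.trace (Bmat (Fin t) * Cs11 W s)

/-- The quadratic `q_s(x) = c_{s00} + 2 c_{s01} x + c_{s11} x²`. -/
noncomputable def qpoly (W : Matrix (Plot a b) (Plot a b) ℝ) (s : BlockArray a b t) (x : ℝ) : ℝ :=
  cs00 W s + 2 * cs01 W s * x + cs11 W s * x ^ 2

/-- A measure on the set of block arrays: nonnegative weights summing to one. -/
def IsMeasure (ξ : BlockArray a b t → ℝ) : Prop :=
  (∀ s, 0 ≤ ξ s) ∧ ∑ s, ξ s = 1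

noncomputable def Cm00 (W : Matrix (Plot a b) (Plot a b) ℝ) (ξ : BlockArray a b t → ℝ) :
    Matrix (Fin t) (Fin t) ℝ := ∑ s, ξ s • Cs00 W s

noncomputable def Cm01 (W : Matrix (Plot a b) (Plot a b) ℝ) (ξ : BlockArray a b t → ℝ) :
    Matrix (Fin t) (Fin t) ℝ := ∑ s, ξ s • Cs01 W s

noncomputable def Cm11 (W : Matrix (Plot a b) (Plot a b) ℝ) (ξ : BlockArray a b t → ℝ) :
    Matrix (Fin t) (Fin t) ℝ := ∑ s, ξ s • Cs11 W s

noncomputable def cm00 (W : Matrix (Plot a b) (Plot a b) ℝ) (ξ : BlockArray a b t → ℝ) : ℝ :=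
  ∑ s, ξ s * cs00 W s

noncomputable def cm01 (W : Matrix (Plot a b) (Plot a b) ℝ) (ξ : BlockArray a b t → ℝ) : ℝ :=
  ∑ s, ξ s * cs01 W s

noncomputable def cm11 (W : Matrix (Plot a b) (Plot a b) ℝ) (ξ : BlockArray a b t → ℝ) : ℝ :=
  ∑ s, ξ s * cs11 W s

/-- `q*_ξ = c_{ξ00} − c_{ξ01}²/c_{ξ11}`. -/
noncomputable def qstar (W : Matrix (Plot a b) (Plot a b) ℝ) (ξ : BlockArray a b t → ℝ) : ℝ :=
  cm00 W ξ - (cm01 W ξ) ^ 2 / cm11 W ξ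

/-- `G` is a generalized inverse of `A`. -/
def IsGenInv (A G : Matrix (Fin t) (Fin t) ℝ) : Prop := A * G * A = A

/-- Information matrix `C_{ξ00} − C_{ξ01} G C_{ξ10}` computed with a generalized inverse `G`. -/
noncomputable def InfoMat (W : Matrix (Plot a b) (Plot a b) ℝ) (ξ : BlockArray a b t → ℝ)
    (G : Matrix (Fin t) (Fin t) ℝ) : Matrix (Fin t) (Fin t) ℝ :=
  Cm00 W ξ - Cm01 W ξ * G * (Cm01 W ξ)ᵀ

/-- A criterion `Φ` on `t×t` real symmetric matrices: concave, Loewner-nondecreasing, and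
invariant under simultaneous permutations of rows and columns. -/
def GoodPhi (t : ℕ) (Φ : Matrix (Fin t) (Fin t) ℝ → ℝ) : Prop :=
  (∀ A B : Matrix (Fin t) (Fin t) ℝ, A.IsSymm → B.IsSymm → ∀ α : ℝ, 0 ≤ α → α ≤ 1 →
      α * Φ A + (1 - α) * Φ B ≤ Φ (α • A + (1 - α) • B)) ∧
  (∀ A B : Matrix (Fin t) (Fin t) ℝ, A.IsSymm → B.IsSymm → (B - A).PosSemidef → Φ A ≤ Φ B) ∧
  (∀ (σ : Equiv.Perm (Fin t)) (C : Matrix (Fin t) (Fin t) ℝ), Φ (C.submatrix σ σ) = Φ C)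

/-- Universal optimality of a measure `ξ`. -/
def UnivOptimal (W : Matrix (Plot a b) (Plot a b) ℝ) (ξ : BlockArray a b t → ℝ) : Prop :=
  ∀ η : BlockArray a b t → ℝ, IsMeasure η →
    ∀ G H : Matrix (Fin t) (Fin t) ℝ, IsGenInv (Cm11 W ξ) G → IsGenInv (Cm11 W η) H →
      ∀ Φ : Matrix (Fin t) (Fin t) ℝ → ℝ, GoodPhi t Φ →
        Φ (InfoMat W η H) ≤ Φ (InfoMat W ξ G)

/-- A measure is symmetric if it is invariant under relabeling of the treatments. -/
def IsSymmetricMeasure (ξ : BlockArray a b t → ℝ) : Prop :=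
  ∀ (σ : Equiv.Perm (Fin t)) (s : BlockArray a b t), ξ (fun q => σ (s q)) = ξ s

/-- A matrix is completely symmetric if it is of the form `αI + βJ`. -/
def ComplSym (A : Matrix (Fin t) (Fin t) ℝ) : Prop :=
  ∃ α β : ℝ, A = α • (1 : Matrix (Fin t) (Fin t) ℝ) + β • Jmat (Fin t)

/-- A measure is pseudo symmetric if `C_{ξ00}`, `C_{ξ01}`, `C_{ξ11}` are completely symmetric. -/
def PseudoSym (W : Matrix (Plot a b) (Plot a b) ℝ) (ξ : BlockArray a b t → ℝ) : Prop :=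
  ComplSym (Cm00 W ξ) ∧ ComplSym (Cm01 W ξ) ∧ ComplSym (Cm11 W ξ)

/-- `r(x) = max_{s∈S} q_s(x)`. -/
noncomputable def rfun {a b : ℕ} (t : ℕ) (W : Matrix (Plot a b) (Plot a b) ℝ) (x : ℝ) : ℝ :=
  sSup (Set.range fun s : BlockArray a b t => qpoly W s x)

/-- `min_{s∈S} q_s(x)`. -/
noncomputable def rmin {a b : ℕ} (t : ℕ) (W : Matrix (Plot a b) (Plot a b) ℝ) (x : ℝ) : ℝ :=
  sInf (Set.range fun s : BlockArray a b t => qpoly W s x)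

/-- Number of plots assigned treatment `k` by `s`. -/
noncomputable def f0 (s : BlockArray a b t) (k : Fin t) : ℕ :=
  {q : Plot a b | s q = k}.ncard

/-- Replications of `k` among the columns `1,…,b−1`. -/
noncomputable def f1 (s : BlockArray a b t) (k : Fin t) : ℕ :=
  {q : Plot a b | s q = k ∧ q.2.val + 1 < b}.ncard

/-- Replications of `k` among the columns `2,…,b`. -/
noncomputable def f2 (s : BlockArray a b t) (k : Fin t) : ℕ :=
  {q : Plot a b | s q = k ∧ 1 ≤ q.2.val}.ncard

/-- Replications of `k` among the rows `1,…,a−1`. -/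
noncomputable def f3 (s : BlockArray a b t) (k : Fin t) : ℕ :=
  {q : Plot a b | s q = k ∧ q.1.val + 1 < a}.ncard

/-- Replications of `k` among the rows `2,…,a`. -/
noncomputable def f4 (s : BlockArray a b t) (k : Fin t) : ℕ :=
  {q : Plot a b | s q = k ∧ 1 ≤ q.1.val}.ncard

noncomputable def fc (s : BlockArray a b t) : ℕ → Fin t → ℕ
  | 0 => f0 s
  | 1 => f1 s
  | 2 => f2 s
  | 3 => f3 s
  | 4 => f4 s
  | _ => fun _ => 0

/-- `h^{uv}_s = Σ_k f^u_{s,k} f^v_{s,k}`. -/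
noncomputable def hval (s : BlockArray a b t) (u v : ℕ) : ℝ :=
  ∑ k : Fin t, (fc s u k : ℝ) * (fc s v k : ℝ)

noncomputable def h00 (s : BlockArray a b t) : ℝ := hval s 0 0

noncomputable def h1 (s : BlockArray a b t) : ℝ :=
  hval s 0 1 + hval s 0 2 + hval s 0 3 + hval s 0 4

noncomputable def h2 (s : BlockArray a b t) : ℝ :=
  hval s 1 1 + hval s 2 2 + hval s 3 3 + hval s 4 4

noncomputable def h3 (s : BlockArray a b t) : ℝ :=
  hval s 1 2 + hval s 1 3 + hval s 1 4 + hval s 2 3 + hval s 2 4 + hval s 3 4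

/-- `z¹_{s,r}`: horizontally adjacent pairs of plots receiving the same treatment. -/
noncomputable def zr1 (s : BlockArray a b t) : ℕ :=
  {qr : Plot a b × Plot a b |
    qr.1.1 = qr.2.1 ∧ qr.1.2.val + 1 = qr.2.2.val ∧ s qr.1 = s qr.2}.ncard

noncomputable def zr2 (s : BlockArray a b t) : ℕ :=
  {qr : Plot a b × Plot a b |
    qr.1.1 = qr.2.1 ∧ qr.1.2.val + 2 = qr.2.2.val ∧ s qr.1 = s qr.2}.ncard

noncomputable def zc1 (s : BlockArray a b t) : ℕ :=
  {qr : Plot a b × Plot a b |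
    qr.1.2 = qr.2.2 ∧ qr.1.1.val + 1 = qr.2.1.val ∧ s qr.1 = s qr.2}.ncard

noncomputable def zc2 (s : BlockArray a b t) : ℕ :=
  {qr : Plot a b × Plot a b |
    qr.1.2 = qr.2.2 ∧ qr.1.1.val + 2 = qr.2.1.val ∧ s qr.1 = s qr.2}.ncard

/-- pairs `(i,j)`, `(i−1,j+1)` with the same treatment. -/
noncomputable def zd1 (s : BlockArray a b t) : ℕ :=
  {qr : Plot a b × Plot a b |
    qr.2.1.val + 1 = qr.1.1.val ∧ qr.1.2.val + 1 = qr.2.2.val ∧ s qr.1 = s qr.2}.ncard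

/-- pairs `(i,j)`, `(i+1,j+1)` with the same treatment. -/
noncomputable def zd2 (s : BlockArray a b t) : ℕ :=
  {qr : Plot a b × Plot a b |
    qr.1.1.val + 1 = qr.2.1.val ∧ qr.1.2.val + 1 = qr.2.2.val ∧ s qr.1 = s qr.2}.ncard

noncomputable def z1 (s : BlockArray a b t) : ℝ := 2 * zr1 s + 2 * zc1 s

noncomputable def z2 (s : BlockArray a b t) : ℝ :=
  2 * zr2 s + 2 * zc2 s + 4 * zd1 s + 4 * zd2 s

/-- `η = 4p − 2a − 2b − 2(8ab − 7a − 7b + 4)/t + 4(2p − a − b)²/(pt)` where `p = ab`. -/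
noncomputable def eta (a b t : ℕ) : ℝ :=
  4 * ((a : ℝ) * b) - 2 * a - 2 * b - 2 * (8 * (a : ℝ) * b - 7 * a - 7 * b + 4) / t +
    4 * (2 * (a : ℝ) * b - a - b) ^ 2 / (((a : ℝ) * b) * t)

/-- A corner plot of the `a × b` block. -/
def IsCorner (q : Plot a b) : Prop :=
  (q.1.val = 0 ∨ q.1.val + 1 = a) ∧ (q.2.val = 0 ∨ q.2.val + 1 = b)

/-- Treatment `k` is significant in `s`: it occupies exactly two plots, which are
neighbors, at least one of them being a corner plot. -/
def Significant (s : BlockArray a b t) (k : Fin t) : Prop :=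
  ∃ u v : Plot a b, u ≠ v ∧ {q : Plot a b | s q = k} = {u, v} ∧
    Neighbor u v ∧ (IsCorner u ∨ IsCorner v)

/-- Treatment `k` is strictly significant in `s`: both of its two plots are corners. -/
def StrictSignificant (s : BlockArray a b t) (k : Fin t) : Prop :=
  ∃ u v : Plot a b, u ≠ v ∧ {q : Plot a b | s q = k} = {u, v} ∧
    Neighbor u v ∧ IsCorner u ∧ IsCorner v

/-- `Q_i`: block arrays with exactly `i` significant treatments in which every other
treatment appears at most once. -/
def Qset (a b t : ℕ) (i : ℕ) : Set (BlockArray a b t) :=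
  {s | {k : Fin t | Significant s k}.ncard = i ∧
       ∀ k : Fin t, ¬ Significant s k → f0 s k ≤ 1}

/-- `Q_j*`: members of `Q_j` whose significant treatments are all strictly significant. -/
def QsetStar (a b t : ℕ) (j : ℕ) : Set (BlockArray a b t) :=
  {s | s ∈ Qset a b t j ∧ ∀ k : Fin t, Significant s k → StrictSignificant s k}

/-- Treatment `k` is connected in `s`. -/
def ConnectedIn (s : BlockArray a b t) (k : Fin t) : Prop :=
  ∀ q r : Plot a b, s q = k → s r = k →
    Relation.ReflTransGen (fun u v => Neighbor u v ∧ s u = k ∧ s v = k) q r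




section core
variable {m : Type*} [Fintype m] {t : ℕ}

lemma Jmat_mulVec_apply {n : Type*} [Fintype n] (v : n → ℝ) (i : n) :
    (Jmat n *ᵥ v) i = ∑ j, v j := by
  simp [Jmat, Matrix.mulVec, dotProduct]

lemma Jmat_transpose {n : Type*} : (Jmat n)ᵀ = Jmat n := by
  ext i j; simp [Jmat]

lemma Bmat_transpose : (Bmat (Fin t))ᵀ = Bmat (Fin t) := by
  simp [Bmat, Jmat_transpose]

lemma JJ : Jmat (Fin t) * Jmat (Fin t) = (t : ℝ) • Jmat (Fin t) := by
  ext i j; simp [Jmat, Matrix.mul_apply]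

lemma BJ (ht : 2 ≤ t) : Bmat (Fin t) * Jmat (Fin t) = 0 := by
  have : (t : ℝ) ≠ 0 := by positivity
  simp [Bmat, sub_mul, JJ, smul_smul, this]

lemma JB (ht : 2 ≤ t) : Jmat (Fin t) * Bmat (Fin t) = 0 := by
  have := congrArg Matrix.transpose (BJ ht)
  simpa [Matrix.transpose_mul, Bmat_transpose, Jmat_transpose] using this

lemma BB (ht : 2 ≤ t) : Bmat (Fin t) * Bmat (Fin t) = Bmat (Fin t) := by
  have : (1 - ((Fintype.card (Fin t) : ℝ))⁻¹ • Jmat (Fin t)) * Bmat (Fin t) = Bmat (Fin t) := by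
    rw [sub_mul, Matrix.smul_mul, JB ht]; simp
  exact this

lemma trJ : (Jmat (Fin t)).trace = t := by
  simp [Jmat, Matrix.trace]

lemma trB (ht : 2 ≤ t) : (Bmat (Fin t)).trace = t - 1 := by
  have : (t : ℝ) ≠ 0 := by positivity
  simp [Bmat, trJ, this]

lemma mul_J_eq_zero {n : Type*} (A : Matrix n (Fin t) ℝ) (h : A *ᵥ 1 = 0) :
    A * Jmat (Fin t) = 0 := by
  ext i j
  have := congrFun h i
  simpa [Jmat, Matrix.mul_apply, Matrix.mulVec, dotProduct] using this

lemma mul_B_eq {n : Type*} (A : Matrix n (Fin t) ℝ) (h : A *ᵥ 1 = 0) :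
    A * Bmat (Fin t) = A := by
  simp [Bmat, Matrix.mul_sub, mul_J_eq_zero A h]

/-- completely symmetric with zero row sums -/
lemma complSym_zero (ht : 2 ≤ t) {A : Matrix (Fin t) (Fin t) ℝ} (hA : ComplSym A)
    (h : A *ᵥ 1 = 0) : A = (A.trace / (t - 1)) • Bmat (Fin t) := by
  obtain ⟨α, β, rfl⟩ := hA
  have ht0 : (t : ℝ) ≠ 0 := by positivity
  have ht1 : (t : ℝ) - 1 ≠ 0 := by
    have : (2 : ℝ) ≤ t := by exact_mod_cast ht
    intro h; linarith
  have h1 := congrArg (· * Bmat (Fin t)) (rfl : α • (1 : Matrix (Fin t) (Fin t) ℝ) + β • Jmat (Fin t) = _)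
  have h2 := mul_B_eq _ h
  rw [add_mul, Matrix.smul_mul, Matrix.smul_mul, JB ht] at h2
  simp only [one_mul, smul_zero, add_zero] at h2
  rw [← h2]
  rw [Matrix.trace_smul, trB ht]
  congr 1
  simp [ht1]

lemma inv_complSym (ht : 2 ≤ t) {A : Matrix (Fin t) (Fin t) ℝ}
    (h : ∀ σ : Equiv.Perm (Fin t), A.submatrix σ σ = A) : ComplSym A := by
  have h' : ∀ (σ : Equiv.Perm (Fin t)) i j, A (σ i) (σ j) = A i j := fun σ i j =>
    congrFun (congrFun (h σ) i) j
  let z : Fin t := ⟨0, by omega⟩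
  let o : Fin t := ⟨1, by omega⟩
  have hzo : z ≠ o := by simp [z, o]
  refine ⟨A z z - A z o, A z o, ?_⟩
  ext i j
  by_cases hij : i = j
  · subst hij
    have := h' (Equiv.swap z i) z z
    simp at this
    simp [Jmat, this]
  · obtain ⟨σ, h1, h2⟩ : ∃ σ : Equiv.Perm (Fin t), σ z = i ∧ σ o = j := by
      refine ⟨(Equiv.swap z i).trans (Equiv.swap (Equiv.swap z i o) j), ?_, ?_⟩
      · simp only [Equiv.trans_apply, Equiv.swap_apply_left]
        apply Equiv.swap_apply_of_ne_of_ne _ hij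
        intro h
        have := congrArg (Equiv.swap z i) h
        simp at this
        exact hzo this
      · simp
    have := h' σ z o
    rw [h1, h2] at this
    simp [Jmat, this, Matrix.one_apply, hij]

noncomputable def avg (A : Matrix (Fin t) (Fin t) ℝ) : Matrix (Fin t) (Fin t) ℝ :=
  ∑ σ : Equiv.Perm (Fin t), ((Fintype.card (Equiv.Perm (Fin t)) : ℝ)⁻¹) • A.submatrix σ σ

lemma avg_complSym (ht : 2 ≤ t) (A : Matrix (Fin t) (Fin t) ℝ) : ComplSym (avg A) := by
  apply inv_complSym ht
  intro τ
  ext i j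
  simp only [avg, Matrix.submatrix_apply, Matrix.sum_apply, Matrix.smul_apply]
  exact Fintype.sum_equiv (Equiv.mulRight τ) _ _ (fun σ => by simp)

lemma card_inv_sum (x : ℝ) :
    ∑ _σ : Equiv.Perm (Fin t), ((Fintype.card (Equiv.Perm (Fin t)) : ℝ)⁻¹) * x = x := by
  have : (Fintype.card (Equiv.Perm (Fin t)) : ℝ) ≠ 0 := by
    exact_mod_cast Fintype.card_ne_zero
  rw [Finset.sum_const, Finset.card_univ, nsmul_eq_mul, ← mul_assoc, mul_inv_cancel₀ this, one_mul]

lemma trace_submatrix_perm (σ : Equiv.Perm (Fin t)) (A : Matrix (Fin t) (Fin t) ℝ) :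
    (A.submatrix σ σ).trace = A.trace := by
  simp only [Matrix.trace, Matrix.diag_apply, Matrix.submatrix_apply]
  exact Equiv.sum_comp σ (fun i => A i i)

lemma avg_trace (A : Matrix (Fin t) (Fin t) ℝ) : (avg A).trace = A.trace := by
  simp only [avg, Matrix.trace_sum, Matrix.trace_smul, trace_submatrix_perm, smul_eq_mul]
  exact card_inv_sum _

lemma avg_mulVec (A : Matrix (Fin t) (Fin t) ℝ) (h : A *ᵥ 1 = 0) : avg A *ᵥ 1 = 0 := by
  have : ∀ σ : Equiv.Perm (Fin t), A.submatrix σ σ *ᵥ 1 = 0 := by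
    intro σ
    ext i
    have h1 := congrFun h (σ i)
    simp only [Matrix.mulVec, dotProduct, Matrix.submatrix_apply, Pi.one_apply, mul_one,
      Pi.zero_apply] at h1 ⊢
    rw [← h1]
    exact Equiv.sum_comp σ (fun j => A (σ i) j)
  simp only [avg, Matrix.sum_mulVec, Matrix.smul_mulVec, this, smul_zero, Finset.sum_const_zero]

lemma phi_avg {Φ : Matrix (Fin t) (Fin t) ℝ → ℝ} (hΦ : GoodPhi t Φ)
    {A : Matrix (Fin t) (Fin t) ℝ} (hA : A.IsSymm) : Φ A ≤ Φ (avg A) := by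
  have hc : ConcaveOn ℝ {A : Matrix (Fin t) (Fin t) ℝ | A.IsSymm} Φ := by
    refine ⟨?_, ?_⟩
    · intro A hA B hB α β _ _ _
      exact (hA.smul α).add (hB.smul β)
    · intro A hA B hB α β h1 h2 h3
      have hb : β = 1 - α := by linarith
      subst hb
      exact hΦ.1 A B hA hB α h1 (by linarith)
  have := hc.le_map_sum (t := Finset.univ)
    (w := fun _ : Equiv.Perm (Fin t) => ((Fintype.card (Equiv.Perm (Fin t)) : ℝ)⁻¹))
    (p := fun σ => A.submatrix σ σ) (fun _ _ => by positivity)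
    (by simpa using card_inv_sum (t := t) 1) (fun σ _ => hA.submatrix σ)
  simp only [hΦ.2.2, smul_eq_mul, card_inv_sum] at this
  exact this

/-! Gram form facts -/

lemma gram_cancel {F : Matrix m (Fin t) ℝ} {H : Matrix (Fin t) (Fin t) ℝ}
    (h : Fᵀ * F * H * (Fᵀ * F) = Fᵀ * F) : F * H * (Fᵀ * F) = F := by
  have h1 : Fᴴ * F * (H * (Fᵀ * F) - 1) = 0 := by
    rw [Matrix.conjTranspose_eq_transpose_of_trivial, Matrix.mul_sub, ← Matrix.mul_assoc, h]
    simp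
  have h2 := (Matrix.conjTranspose_mul_self_mul_eq_zero F _).1 h1
  rw [Matrix.mul_sub, sub_eq_zero, Matrix.mul_one, ← Matrix.mul_assoc] at h2
  exact h2

lemma gram_info {T F : Matrix m (Fin t) ℝ} {H : Matrix (Fin t) (Fin t) ℝ}
    (h : Fᵀ * F * H * (Fᵀ * F) = Fᵀ * F) (X : Matrix (Fin t) (Fin t) ℝ) :
    (Tᵀ * T - Tᵀ * F * H * (Tᵀ * F)ᵀ).IsSymm ∧
    ((T + F * X)ᵀ * (T + F * X) - (Tᵀ * T - Tᵀ * F * H * (Tᵀ * F)ᵀ)).PosSemidef := by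
  have h' : Fᵀ * F * Hᵀ * (Fᵀ * F) = Fᵀ * F := by
    have := congrArg Matrix.transpose h
    simpa [Matrix.transpose_mul, Matrix.mul_assoc] using this
  have g := gram_cancel h
  have g' := gram_cancel h'
  obtain ⟨K, hK⟩ : ∃ K, K = F * H * Fᵀ := ⟨_, rfl⟩
  have hKK : Kᵀ * K = K := by
    have : Kᵀ * K = F * Hᵀ * (Fᵀ * F) * (H * Fᵀ) := by
      simp [hK, Matrix.transpose_mul, Matrix.mul_assoc]
    rw [this, g', hK, Matrix.mul_assoc]
  have hKT : Kᵀ = K := by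
    have := congrArg Matrix.transpose hKK
    rw [Matrix.transpose_mul, Matrix.transpose_transpose, hKK] at this
    exact this.symm
  have hKF : K * F = F := by rw [hK, Matrix.mul_assoc, g]
  have hFK : Fᵀ * K = Fᵀ := by
    have := congrArg Matrix.transpose hKF
    rwa [Matrix.transpose_mul, hKT] at this
  have e : Tᵀ * F * H * (Tᵀ * F)ᵀ = Tᵀ * K * T := by
    simp [hK, Matrix.transpose_mul, Matrix.mul_assoc]
  rw [e]
  refine ⟨?_, ?_⟩
  · simp [Matrix.IsSymm, Matrix.transpose_mul, hKT, Matrix.mul_assoc]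
  · have : (T + F * X)ᵀ * (T + F * X) - (Tᵀ * T - Tᵀ * K * T)
        = (K * (T + F * X))ᴴ * (K * (T + F * X)) := by
      rw [Matrix.conjTranspose_eq_transpose_of_trivial, Matrix.transpose_mul K,
        Matrix.mul_assoc (T + F * X)ᵀ, ← Matrix.mul_assoc Kᵀ, hKK]
      simp only [Matrix.transpose_add, Matrix.transpose_mul, Matrix.add_mul, Matrix.mul_add,
        ← Matrix.mul_assoc]
      have a1 : Xᵀ * Fᵀ * K = Xᵀ * Fᵀ := by rw [Matrix.mul_assoc, hFK]
      have a2 : Tᵀ * K * F = Tᵀ * F := by rw [Matrix.mul_assoc, hKF]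
      rw [a1, a2]
      abel
    rw [this]
    exact Matrix.posSemidef_conjTranspose_mul_self _

lemma c11_zero (ht : 2 ≤ t) {T F : Matrix m (Fin t) ℝ}
    (h : (Bmat (Fin t) * (Fᵀ * F)).trace = 0) : (Bmat (Fin t) * (Tᵀ * F)).trace = 0 := by
  have h1 : ((F * Bmat (Fin t))ᴴ * (F * Bmat (Fin t))).trace = 0 := by
    rw [Matrix.conjTranspose_eq_transpose_of_trivial, Matrix.transpose_mul, Bmat_transpose, ← h]
    conv_rhs => rw [← BB ht, Matrix.mul_assoc, Matrix.trace_mul_comm]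
    simp only [Matrix.mul_assoc]
  have h2 := Matrix.trace_conjTranspose_mul_self_eq_zero_iff.1 h1
  rw [Matrix.trace_mul_comm, Matrix.mul_assoc, h2]; simp

lemma c11_nonneg (ht : 2 ≤ t) {F : Matrix m (Fin t) ℝ} :
    0 ≤ (Bmat (Fin t) * (Fᵀ * F)).trace := by
  have h1 : 0 ≤ ((F * Bmat (Fin t))ᴴ * (F * Bmat (Fin t))).trace :=
    (Matrix.posSemidef_conjTranspose_mul_self _).trace_nonneg
  rw [Matrix.conjTranspose_eq_transpose_of_trivial, Matrix.transpose_mul, Bmat_transpose] at h1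
  rw [← BB ht, Matrix.mul_assoc, Matrix.trace_mul_comm]
  simpa only [Matrix.mul_assoc] using h1

/-- trace of the information matrix is at most `q*`. -/
lemma trace_info_le (ht : 2 ≤ t) {T F : Matrix m (Fin t) ℝ} {H : Matrix (Fin t) (Fin t) ℝ}
    (hT : T *ᵥ 1 = 0) (h : Fᵀ * F * H * (Fᵀ * F) = Fᵀ * F) :
    (Tᵀ * T - Tᵀ * F * H * (Tᵀ * F)ᵀ).trace ≤
      (Bmat (Fin t) * (Tᵀ * T)).trace -
        (Bmat (Fin t) * (Tᵀ * F)).trace ^ 2 / (Bmat (Fin t) * (Fᵀ * F)).trace := by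
  set c1 := (Bmat (Fin t) * (Tᵀ * F)).trace with hc1
  set c2 := (Bmat (Fin t) * (Fᵀ * F)).trace with hc2
  have key : ∀ x : ℝ, (Tᵀ * T - Tᵀ * F * H * (Tᵀ * F)ᵀ).trace ≤
      (Bmat (Fin t) * (Tᵀ * T)).trace + 2 * x * c1 + x ^ 2 * c2 := by
    intro x
    have h1 := (gram_info (T := T) h (x • Bmat (Fin t))).2.trace_nonneg
    rw [Matrix.trace_sub, sub_nonneg] at h1
    refine h1.trans (le_of_eq ?_)
    have e0 : (Bmat (Fin t) * (Tᵀ * T)).trace = (Tᵀ * T).trace := by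
      rw [Matrix.trace_mul_comm, Matrix.mul_assoc, mul_B_eq T hT]
    have e1 : (Tᵀ * (F * Bmat (Fin t))).trace = c1 := by
      rw [hc1, ← Matrix.mul_assoc, Matrix.trace_mul_comm]
    have e2 : ((F * Bmat (Fin t))ᵀ * T).trace = c1 := by
      rw [← e1, ← Matrix.trace_transpose, Matrix.transpose_mul, Matrix.transpose_transpose]
    have e3 : ((F * Bmat (Fin t))ᵀ * (F * Bmat (Fin t))).trace = c2 := by
      rw [hc2, Matrix.transpose_mul, Bmat_transpose, Matrix.mul_assoc]
      conv_rhs => rw [← BB ht, Matrix.mul_assoc, Matrix.trace_mul_comm]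
      simp only [Matrix.mul_assoc]
    rw [e0]
    simp only [Matrix.mul_smul, Matrix.transpose_add, Matrix.transpose_smul, Matrix.add_mul,
      Matrix.mul_add, Matrix.trace_add, Matrix.smul_mul, Matrix.trace_smul, e1, e2, e3, smul_eq_mul]
    ring
  by_cases hz : c2 = 0
  · have := key 0
    simpa [hz] using this
  · have := key (-c1 / c2)
    refine this.trans (le_of_eq ?_)
    field_simp
    ring

lemma info_complSym (ht : 2 ≤ t) {T F : Matrix m (Fin t) ℝ} {G : Matrix (Fin t) (Fin t) ℝ}
    (hT : T *ᵥ 1 = 0) (h : Fᵀ * F * G * (Fᵀ * F) = Fᵀ * F)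
    (h0 : ComplSym (Tᵀ * T)) (h1 : ComplSym (Tᵀ * F)) (h2 : ComplSym (Fᵀ * F)) :
    Tᵀ * T - Tᵀ * F * G * (Tᵀ * F)ᵀ =
      (((Bmat (Fin t) * (Tᵀ * T)).trace -
        (Bmat (Fin t) * (Tᵀ * F)).trace ^ 2 / (Bmat (Fin t) * (Fᵀ * F)).trace) / (t - 1)) •
        Bmat (Fin t) := by
  have ht1 : (t : ℝ) - 1 ≠ 0 := by
    have : (2 : ℝ) ≤ t := by exact_mod_cast ht
    intro h; linarith
  have r0 : (Tᵀ * T) *ᵥ 1 = 0 := by rw [← Matrix.mulVec_mulVec, hT, Matrix.mulVec_zero]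
  have s1 : (Tᵀ * F)ᵀ = Tᵀ * F := by
    obtain ⟨α, β, e⟩ := h1
    rw [e]; simp [Jmat_transpose]
  have r1 : (Tᵀ * F) *ᵥ 1 = 0 := by
    rw [← s1, Matrix.transpose_mul, Matrix.transpose_transpose, ← Matrix.mulVec_mulVec, hT,
      Matrix.mulVec_zero]
  have z11 := c11_zero (T := T) (F := F) ht
  have e0 := complSym_zero ht h0 r0
  have e1 := complSym_zero ht h1 r1
  generalize (Tᵀ * T).trace / ((t : ℝ) - 1) = α0 at e0
  generalize (Tᵀ * F).trace / ((t : ℝ) - 1) = α1 at e1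
  obtain ⟨α, β, e2⟩ := h2
  have bF : Bmat (Fin t) * (Fᵀ * F) = α • Bmat (Fin t) := by
    rw [e2, Matrix.mul_add, Matrix.mul_smul, Matrix.mul_smul, BJ ht]; simp
  have c0 : (Bmat (Fin t) * (Tᵀ * T)).trace = α0 * (t - 1) := by
    rw [e0, Matrix.mul_smul, BB ht, Matrix.trace_smul, trB ht, smul_eq_mul]
  have c1 : (Bmat (Fin t) * (Tᵀ * F)).trace = α1 * (t - 1) := by
    rw [e1, Matrix.mul_smul, BB ht, Matrix.trace_smul, trB ht, smul_eq_mul]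
  have c2 : (Bmat (Fin t) * (Fᵀ * F)).trace = α * (t - 1) := by
    rw [bF, Matrix.trace_smul, trB ht, smul_eq_mul]
  rw [s1]
  rw [c1, c2] at z11
  rw [c0, c1, c2]
  by_cases hα : α = 0
  · have : α1 = 0 := by
      have := z11 (by simp [hα])
      simpa [ht1] using this
    rw [e0, e1, this]
    simp [ht1]
  · have f1 : Tᵀ * F = (α1 / α) • (Bmat (Fin t) * (Fᵀ * F)) := by
      rw [bF, e1, smul_smul]; congr 1; field_simp
    have f2 : Tᵀ * F = (α1 / α) • ((Fᵀ * F) * Bmat (Fin t)) := by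
      have := congrArg Matrix.transpose f1
      rw [s1] at this
      rw [this]
      simp [Matrix.transpose_mul, Bmat_transpose]
    have f3 : Tᵀ * F * G * (Tᵀ * F) = ((α1 / α) ^ 2 * α) • Bmat (Fin t) := by
      calc Tᵀ * F * G * (Tᵀ * F)
          = ((α1 / α) • (Bmat (Fin t) * (Fᵀ * F))) * G * ((α1 / α) • ((Fᵀ * F) * Bmat (Fin t))) := by
            rw [← f1, ← f2]
        _ = ((α1 / α) ^ 2) • (Bmat (Fin t) * ((Fᵀ * F) * G * (Fᵀ * F)) * Bmat (Fin t)) := by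
            simp only [Matrix.smul_mul, Matrix.mul_smul, smul_smul, Matrix.mul_assoc, pow_two]
        _ = _ := by
            rw [h, bF, Matrix.smul_mul, BB ht, smul_smul]
    rw [f3, e0, ← sub_smul]
    congr 1
    field_simp

lemma exists_genInv (ht : 2 ≤ t) {A : Matrix (Fin t) (Fin t) ℝ} (hA : ComplSym A) :
    ∃ G, IsGenInv A G := by
  obtain ⟨α, β, rfl⟩ := hA
  have ht0 : (t : ℝ) ≠ 0 := by positivity
  obtain ⟨γ, hγ⟩ : ∃ γ : ℝ, γ = β + α * (t : ℝ)⁻¹ := ⟨_, rfl⟩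
  have e : α • (1 : Matrix (Fin t) (Fin t) ℝ) + β • Jmat (Fin t)
      = α • Bmat (Fin t) + γ • Jmat (Fin t) := by
    simp only [hγ, Bmat, smul_sub, add_smul, smul_smul, Fintype.card_fin]
    abel
  refine ⟨α⁻¹ • Bmat (Fin t) + (γ⁻¹ * (t : ℝ)⁻¹ ^ 2) • Jmat (Fin t), ?_⟩
  rw [IsGenInv, e]
  simp only [Matrix.add_mul, Matrix.mul_add, Matrix.smul_mul, Matrix.mul_smul, BB ht, BJ ht, JB ht,
    JJ, smul_zero, add_zero, zero_add, smul_smul]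
  congr 2
  · by_cases h : α = 0
    · simp [h]
    · field_simp
  · by_cases h : γ = 0
    · simp [h]
    · field_simp

end core


open scoped MatrixOrder Matrix.Norms.L2Operator in
lemma psd_factor {n : Type*} [Fintype n] [DecidableEq n] {S : Matrix n n ℝ} (hS : S.PosSemidef) :
    ∃ Q : Matrix n n ℝ, S = Qᵀ * Q := by
  obtain ⟨Q, hQ⟩ := CStarAlgebra.nonneg_iff_eq_star_mul_self.mp hS.nonneg
  exact ⟨Q, by rw [hQ, Matrix.star_eq_conjTranspose,
    Matrix.conjTranspose_eq_transpose_of_trivial]⟩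

lemma Btilde_gram (ha : 2 ≤ a) (hb : 3 ≤ b) {Sig : Matrix (Plot a b) (Plot a b) ℝ}
    (hSig : Sig.PosDef) :
    ∃ R : Matrix (Plot a b) (Plot a b) ℝ, Btilde Sig = Rᵀ * R ∧ R *ᵥ 1 = 0 := by
  have hS := hSig.inv
  have : Nonempty (Plot a b) := ⟨(⟨0, by omega⟩, ⟨0, by omega⟩)⟩
  unfold Btilde
  generalize Sig⁻¹ = S at hS
  obtain ⟨x, hx⟩ : ∃ x, x = ∑ i, ∑ j, S i j := ⟨_, rfl⟩
  rw [← hx]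
  have hx0 : x ≠ 0 := by
    have h1 : (0 : ℝ) < star (1 : Plot a b → ℝ) ⬝ᵥ (S *ᵥ 1) := by
      apply hS.dotProduct_mulVec_pos
      exact one_ne_zero
    have : star (1 : Plot a b → ℝ) ⬝ᵥ (S *ᵥ 1) = x := by
      simp [hx, dotProduct, Matrix.mulVec]
    rw [this] at h1
    exact h1.ne'
  have hST : Sᵀ = S := by
    have := hS.isHermitian
    rwa [Matrix.IsHermitian, Matrix.conjTranspose_eq_transpose_of_trivial] at this
  have hJSJ : Jmat (Plot a b) * S * Jmat (Plot a b) = x • Jmat (Plot a b) := by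
    ext i j
    simp only [Jmat, Matrix.mul_apply, Matrix.of_apply, one_mul, mul_one, Matrix.smul_apply,
      smul_eq_mul, hx]
    exact Finset.sum_comm
  obtain ⟨Q, hQ⟩ : ∃ Q : Matrix (Plot a b) (Plot a b) ℝ, S = Qᵀ * Q := psd_factor hS.posSemidef
  refine ⟨Q * (1 - x⁻¹ • (Jmat (Plot a b) * S)), ?_, ?_⟩
  · have e1 : (Q * (1 - x⁻¹ • (Jmat (Plot a b) * S)))ᵀ = (1 - x⁻¹ • (S * Jmat (Plot a b))) * Qᵀ := by
      rw [Matrix.transpose_mul, Matrix.transpose_sub, Matrix.transpose_smul, Matrix.transpose_mul,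
        hST, Jmat_transpose, Matrix.transpose_one]
    rw [e1, Matrix.mul_assoc (1 - x⁻¹ • (S * Jmat (Plot a b))), ← Matrix.mul_assoc Qᵀ, ← hQ]
    have e2 : S * Jmat (Plot a b) * (S * (Jmat (Plot a b) * S)) = x • (S * Jmat (Plot a b) * S) := by
      calc _ = S * (Jmat (Plot a b) * S * Jmat (Plot a b)) * S := by simp only [Matrix.mul_assoc]
        _ = _ := by rw [hJSJ, Matrix.mul_smul, Matrix.smul_mul]
    simp only [Matrix.sub_mul, Matrix.mul_sub, Matrix.one_mul, Matrix.mul_one, Matrix.smul_mul,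
      Matrix.mul_smul, e2]
    rw [smul_smul x⁻¹ x, inv_mul_cancel₀ hx0, one_smul]
    simp only [Matrix.mul_assoc]
    simp
  · rw [← Matrix.mulVec_mulVec]
    have : (1 - x⁻¹ • (Jmat (Plot a b) * S)) *ᵥ 1 = 0 := by
      rw [Matrix.sub_mulVec, Matrix.smul_mulVec, ← Matrix.mulVec_mulVec]
      ext i
      have : ∑ j, (S *ᵥ 1) j = x := by simp [hx, Matrix.mulVec, dotProduct]
      rw [Pi.sub_apply, Pi.smul_apply, Jmat_mulVec_apply, this]
      simp [hx0]
    rw [this, Matrix.mulVec_zero]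

lemma Tmat_mulVec (s : BlockArray a b t) : Tmat s *ᵥ 1 = 1 := by
  ext q
  simp [Tmat, Matrix.mulVec, dotProduct]

/-- Stacked weighted matrices. -/
noncomputable def stack (R : Matrix (Plot a b) (Plot a b) ℝ) (ξ : BlockArray a b t → ℝ)
    (A : BlockArray a b t → Matrix (Plot a b) (Fin t) ℝ) :
    Matrix (BlockArray a b t × Plot a b) (Fin t) ℝ :=
  Matrix.of fun sq k => √(ξ sq.1) * (R * A sq.1) sq.2 k

lemma stack_gram (R : Matrix (Plot a b) (Plot a b) ℝ) (ξ : BlockArray a b t → ℝ)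
    (hξ : ∀ s, 0 ≤ ξ s) (A B : BlockArray a b t → Matrix (Plot a b) (Fin t) ℝ) :
    (stack R ξ A)ᵀ * stack R ξ B = ∑ s, ξ s • ((A s)ᵀ * (Rᵀ * R) * B s) := by
  ext i j
  rw [Matrix.sum_apply, Matrix.mul_apply, Fintype.sum_prod_type]
  refine Finset.sum_congr rfl fun s _ => ?_
  have : (A s)ᵀ * (Rᵀ * R) * B s = (R * A s)ᵀ * (R * B s) := by
    simp only [Matrix.transpose_mul, Matrix.mul_assoc]
  rw [this, Matrix.smul_apply, Matrix.mul_apply, smul_eq_mul, Finset.mul_sum]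
  refine Finset.sum_congr rfl fun q _ => ?_
  simp only [stack, Matrix.transpose_apply, Matrix.of_apply]
  have := Real.mul_self_sqrt (hξ s)
  linear_combination (R * A s) q i * (R * B s) q j * this

lemma exists_gram (ha : 2 ≤ a) (hb : 3 ≤ b) {Sig : Matrix (Plot a b) (Plot a b) ℝ}
    (hSig : Sig.PosDef) (ξ : BlockArray a b t → ℝ) (hξ : IsMeasure ξ) :
    ∃ T F : Matrix (BlockArray a b t × Plot a b) (Fin t) ℝ,
      Cm00 (Btilde Sig) ξ = Tᵀ * T ∧ Cm01 (Btilde Sig) ξ = Tᵀ * F ∧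
      Cm11 (Btilde Sig) ξ = Fᵀ * F ∧ T *ᵥ 1 = 0 := by
  obtain ⟨R, hR, hR1⟩ := Btilde_gram ha hb hSig
  refine ⟨stack R ξ Tmat, stack R ξ Fmat, ?_, ?_, ?_, ?_⟩
  · rw [stack_gram R ξ hξ.1, ← hR]; rfl
  · rw [stack_gram R ξ hξ.1, ← hR]; rfl
  · rw [stack_gram R ξ hξ.1, ← hR]; rfl
  · ext ⟨s, q⟩
    have h1 : ((R * Tmat s) *ᵥ 1) q = 0 := by
      rw [← Matrix.mulVec_mulVec, Tmat_mulVec, hR1]; rfl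
    simp only [Matrix.mulVec, dotProduct, Pi.one_apply, mul_one, Pi.zero_apply, stack,
      Matrix.of_apply] at h1 ⊢
    rw [← Finset.mul_sum, h1, mul_zero]

variable (W : Matrix (Plot a b) (Plot a b) ℝ) (ξ : BlockArray a b t → ℝ)

lemma cm00_eq : cm00 W ξ = (Bmat (Fin t) * Cm00 W ξ).trace := by
  simp [cm00, Cm00, cs00, Matrix.mul_sum, Matrix.trace_sum]

lemma cm01_eq : cm01 W ξ = (Bmat (Fin t) * Cm01 W ξ).trace := by
  simp [cm01, Cm01, cs01, Matrix.mul_sum, Matrix.trace_sum]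

lemma cm11_eq : cm11 W ξ = (Bmat (Fin t) * Cm11 W ξ).trace := by
  simp [cm11, Cm11, cs11, Matrix.mul_sum, Matrix.trace_sum]

/-- Symmetrization of a measure. -/
noncomputable def symz : BlockArray a b t → ℝ := fun s =>
  ∑ σ : Equiv.Perm (Fin t), ((Fintype.card (Equiv.Perm (Fin t)) : ℝ)⁻¹) * ξ (fun q => σ.symm (s q))

lemma symz_sum {M : Type*} [AddCommGroup M] [Module ℝ M] (f : BlockArray a b t → M) :
    ∑ s, symz ξ s • f s = ∑ σ : Equiv.Perm (Fin t),
      ((Fintype.card (Equiv.Perm (Fin t)) : ℝ)⁻¹) • ∑ s, ξ s • f (fun q => σ (s q)) := by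
  simp only [symz, Finset.sum_smul]
  rw [Finset.sum_comm]
  refine Finset.sum_congr rfl fun σ _ => ?_
  rw [Finset.smul_sum]
  exact Fintype.sum_equiv (Equiv.arrowCongr (Equiv.refl _) σ.symm) _ _ (fun s => by
    simp [smul_smul, Equiv.arrowCongr, Function.comp_def])

lemma symz_avg (f : BlockArray a b t → Matrix (Fin t) (Fin t) ℝ)
    (hf : ∀ (σ : Equiv.Perm (Fin t)) s, f (fun q => σ (s q)) = (f s).submatrix σ.symm σ.symm) :
    ∑ s, symz ξ s • f s = avg (∑ s, ξ s • f s) := by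
  rw [symz_sum, avg]
  refine Fintype.sum_equiv (Equiv.inv _) _ _ (fun σ => ?_)
  congr 1
  ext i j
  simp [hf, Matrix.sum_apply, Equiv.Perm.inv_def]

lemma symz_measure (hξ : IsMeasure ξ) : IsMeasure (symz ξ) := by
  refine ⟨fun s => Finset.sum_nonneg fun σ _ => mul_nonneg (by positivity) (hξ.1 _), ?_⟩
  have := symz_sum ξ (fun _ => (1 : ℝ))
  simp only [smul_eq_mul, mul_one] at this
  rw [this, hξ.2]
  exact card_inv_sum 1 |>.symm ▸ (by simpa using card_inv_sum (t := t) 1)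

lemma Tmat_perm (σ : Equiv.Perm (Fin t)) (s : BlockArray a b t) :
    Tmat (fun q => σ (s q)) = (Tmat s).submatrix id σ.symm := by
  ext q k
  simp [Tmat, Equiv.eq_symm_apply]

lemma Fmat_perm (σ : Equiv.Perm (Fin t)) (s : BlockArray a b t) :
    Fmat (fun q => σ (s q)) = (Fmat s).submatrix id σ.symm := by
  ext q k
  simp [Fmat, Tmat_perm, Matrix.mul_apply]

lemma Cs_perm (A B : Matrix (Plot a b) (Fin t) ℝ) (σ : Equiv.Perm (Fin t)) :
    (A.submatrix id σ)ᵀ * W * B.submatrix id σ = (Aᵀ * W * B).submatrix σ σ := by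
  ext i j
  simp [Matrix.mul_apply]

lemma Cm00_symz : Cm00 W (symz ξ) = avg (Cm00 W ξ) :=
  symz_avg ξ _ fun σ s => by rw [Cs00, Tmat_perm, Cs_perm]; rfl

lemma Cm01_symz : Cm01 W (symz ξ) = avg (Cm01 W ξ) :=
  symz_avg ξ _ fun σ s => by rw [Cs01, Tmat_perm, Fmat_perm, Cs_perm]; rfl

lemma Cm11_symz : Cm11 W (symz ξ) = avg (Cm11 W ξ) :=
  symz_avg ξ _ fun σ s => by rw [Cs11, Fmat_perm, Cs_perm]; rfl

lemma trace_B_avg (A : Matrix (Fin t) (Fin t) ℝ) :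
    (Bmat (Fin t) * avg A).trace = (Bmat (Fin t) * A).trace := by
  have h : ∀ σ : Equiv.Perm (Fin t),
      (Bmat (Fin t) * A.submatrix σ σ).trace = (Bmat (Fin t) * A).trace := by
    intro σ
    have hB : (Bmat (Fin t)).submatrix σ σ = Bmat (Fin t) := by
      ext i j; simp [Bmat, Jmat, Matrix.one_apply]
    conv_lhs => rw [← hB]
    rw [Matrix.submatrix_mul_equiv, trace_submatrix_perm]
  simp only [avg, Matrix.mul_sum, Matrix.mul_smul, Matrix.trace_sum, Matrix.trace_smul, h,
    smul_eq_mul]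
  exact card_inv_sum _

lemma qstar_symz : qstar W (symz ξ) = qstar W ξ := by
  simp only [qstar, cm00_eq, cm01_eq, cm11_eq, Cm00_symz, Cm01_symz, Cm11_symz, trace_B_avg]

lemma pseudoSym_symz (ht : 2 ≤ t) : PseudoSym W (symz ξ) := by
  refine ⟨?_, ?_, ?_⟩
  · rw [Cm00_symz]; exact avg_complSym ht _
  · rw [Cm01_symz]; exact avg_complSym ht _
  · rw [Cm11_symz]; exact avg_complSym ht _

variable {ξ}

lemma pseudoSym_info (ha : 2 ≤ a) (hb : 3 ≤ b) (ht : 2 ≤ t)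
    {Sig : Matrix (Plot a b) (Plot a b) ℝ} (hSig : Sig.PosDef) (hξ : IsMeasure ξ)
    (hps : PseudoSym (Btilde Sig) ξ) {G : Matrix (Fin t) (Fin t) ℝ}
    (hG : IsGenInv (Cm11 (Btilde Sig) ξ) G) :
    InfoMat (Btilde Sig) ξ G = (qstar (Btilde Sig) ξ / (t - 1)) • Bmat (Fin t) := by
  obtain ⟨T, F, h00, h01, h11, hT⟩ := exists_gram ha hb hSig ξ hξ
  rw [PseudoSym, h00, h01, h11] at hps
  rw [IsGenInv, h11] at hG
  rw [InfoMat, qstar, cm00_eq, cm01_eq, cm11_eq, h00, h01, h11]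
  exact info_complSym ht hT hG hps.1 hps.2.1 hps.2.2

lemma phi_info_le (ha : 2 ≤ a) (hb : 3 ≤ b) (ht : 2 ≤ t)
    {Sig : Matrix (Plot a b) (Plot a b) ℝ} (hSig : Sig.PosDef) (hξ : IsMeasure ξ)
    {H : Matrix (Fin t) (Fin t) ℝ} (hH : IsGenInv (Cm11 (Btilde Sig) ξ) H)
    {Φ : Matrix (Fin t) (Fin t) ℝ → ℝ} (hΦ : GoodPhi t Φ) {y : ℝ}
    (hy : qstar (Btilde Sig) ξ ≤ y) :
    Φ (InfoMat (Btilde Sig) ξ H) ≤ Φ ((y / (t - 1)) • Bmat (Fin t)) := by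
  obtain ⟨T, F, h00, h01, h11, hT⟩ := exists_gram ha hb hSig ξ hξ
  rw [IsGenInv, h11] at hH
  have ht1 : (0 : ℝ) < (t : ℝ) - 1 := by
    have : (2 : ℝ) ≤ t := by exact_mod_cast ht
    linarith
  have htr : (InfoMat (Btilde Sig) ξ H).trace ≤ y := by
    refine le_trans ?_ hy
    rw [InfoMat, qstar, cm00_eq, cm01_eq, cm11_eq, h00, h01, h11]
    exact trace_info_le ht hT hH
  have hsym : (InfoMat (Btilde Sig) ξ H).IsSymm := by
    rw [InfoMat, h00, h01]
    exact (gram_info hH 0).1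
  have hone : InfoMat (Btilde Sig) ξ H *ᵥ 1 = 0 := by
    rw [InfoMat, h00, h01, Matrix.sub_mulVec, ← Matrix.mulVec_mulVec, ← Matrix.mulVec_mulVec,
      Matrix.transpose_mul, Matrix.transpose_transpose, ← Matrix.mulVec_mulVec 1 Fᵀ, hT]
    simp only [Matrix.mulVec_zero, sub_zero]
  refine (phi_avg hΦ hsym).trans ?_
  rw [complSym_zero ht (avg_complSym ht _) (avg_mulVec _ hone), avg_trace]
  have hBs : (Bmat (Fin t)).IsSymm := Bmat_transpose
  refine hΦ.2.1 _ _ (hBs.smul _) (hBs.smul _) ?_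
  rw [← sub_smul]
  have hB : (Bmat (Fin t)).PosSemidef := by
    have := Matrix.posSemidef_conjTranspose_mul_self (Bmat (Fin t))
    rwa [Matrix.conjTranspose_eq_transpose_of_trivial, Bmat_transpose, BB ht] at this
  apply hB.smul
  rw [← sub_div]
  exact div_nonneg (by linarith) ht1.le

lemma goodPhi_trace : GoodPhi t Matrix.trace := by
  refine ⟨?_, ?_, ?_⟩
  · intro A B _ _ α _ _
    simp
  · intro A B _ _ h
    have := h.trace_nonneg
    rw [Matrix.trace_sub] at this
    linarith
  · intro σ C
    exact trace_submatrix_perm σ C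

/-- with `y*` the maximum of `q*` over all measures, a pseudo symmetric
measure is universally optimal iff `q*_ξ = y*`. -/
theorem pseudoSym_univOptimal_iff_qstar_eq_max
    (a b t : ℕ) (ha : 2 ≤ a) (hab : a ≤ b) (hb : 3 ≤ b) (ht : 2 ≤ t)
    (Sig : Matrix (Plot a b) (Plot a b) ℝ) (hSig : Sig.PosDef)
    (ystar : ℝ)
    (hy : IsGreatest {y : ℝ | ∃ η : BlockArray a b t → ℝ,
            IsMeasure η ∧ qstar (Btilde Sig) η = y} ystar)
    (ξ : BlockArray a b t → ℝ) (hξ : IsMeasure ξ) (hps : PseudoSym (Btilde Sig) ξ) :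
    UnivOptimal (Btilde Sig) ξ ↔ qstar (Btilde Sig) ξ = ystar := by
  constructor
  · intro hopt
    obtain ⟨η, hη, hηy⟩ := hy.1
    refine le_antisymm (hy.2 ⟨ξ, hξ, rfl⟩) ?_
    have hps' := pseudoSym_symz (Btilde Sig) η ht
    have hη' := symz_measure η hη
    obtain ⟨G, hG⟩ := exists_genInv ht hps.2.2
    obtain ⟨H, hH⟩ := exists_genInv ht hps'.2.2
    have h := hopt (symz η) hη' G H hG hH Matrix.trace goodPhi_trace
    rw [pseudoSym_info ha hb ht hSig hξ hps hG, pseudoSym_info ha hb ht hSig hη' hps' hH,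
      qstar_symz, hηy, Matrix.trace_smul, Matrix.trace_smul, trB ht, smul_eq_mul, smul_eq_mul] at h
    have ht1 : (t : ℝ) - 1 ≠ 0 := by
      have : (2 : ℝ) ≤ t := by exact_mod_cast ht
      intro h; linarith
    rwa [div_mul_cancel₀ _ ht1, div_mul_cancel₀ _ ht1] at h
  · intro hq η hη G H hG hH Φ hΦ
    rw [pseudoSym_info ha hb ht hSig hξ hps hG, hq]
    exact phi_info_le ha hb ht hSig hη hH hΦ (hy.2 ⟨η, hη, rfl⟩)

end TwoDim
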